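/- The function R_iid admits the Taylor expansion R_iid(p) = (1/2)·log(σ²/D) + (p−σ²)/(2σ²) + O((p−σ²)²) as p → σ²: there exist δ > 0 and C > 0 such that for every p with |p − σ²| < δ, one has |R_iid(p) − (1/2)·log(σ²/D) − (p−σ²)/(2σ²)| ≤ C·(p−σ²)². -/

import Mathlib

/-- `s*(p)` -/
noncomputable def sStar (σ D p : ℝ) : ℝ :=
  max 0 ((σ ^ 2 - 3 * D + Real.sqrt ((σ ^ 2 - D) ^ 2 + 4 * p * D)) / (4 * D))

/-- `R_iid(p)` -/
noncomputable def Riid (σ D p : ℝ) : ℝ :=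
  (1 / 2) * Real.log (1 + 2 * sStar σ D p) +
    sStar σ D p * p / ((1 + 2 * sStar σ D p) * (σ ^ 2 - D)) -
    sStar σ D p * D / (σ ^ 2 - D)

/-!
Substitute `u = 1 + 2 s*(p)`. While the maximum in `s*` is inactive, `u ≥ 1` is the larger root of
`D u² - (σ² - D) u = p`, so that `p - σ² = (D u - σ²) (u + 1)`, and `R_iid` loses its square root:
`R_iid(p) = log u / 2 + (u - 1) (D u - σ²) / (2 (σ² - D))`. At `p = σ²` the root is `u = σ² / D`.
In the variable `u` the remainder of the expansion is half the first-order remainder of `log` at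
`σ² / D` plus a multiple of `(D u - σ²)²`; both are quadratic in `D u - σ²`, and
`2 |D u - σ²| ≤ |p - σ²|` because `u ≥ 1`.
-/

theorem abs_log_sub_log_sub_div_le {a x : ℝ} (ha : 0 < a) (hx : 0 < x) :
    |Real.log x - Real.log a - (x - a) / a| ≤ (x - a) ^ 2 / (a * x) := by
  have hupper : Real.log (x / a) ≤ x / a - 1 := Real.log_le_sub_one_of_pos (by positivity)
  have hlower : 1 - (x / a)⁻¹ ≤ Real.log (x / a) := Real.one_sub_inv_le_log_of_pos (by positivity)
  have hgap : (x - a) ^ 2 / (a * x) = (x / a - 1) - (1 - (x / a)⁻¹) := by field_simp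
  rw [← Real.log_div hx.ne' ha.ne', sub_div, div_self ha.ne', hgap, abs_le]
  constructor <;> linarith

/-- The larger root `u` of `D u² - w u = p`, for `D > 0` and a nonnegative discriminant. For
`w = σ² - D` it is the value of `1 + 2 s*(p)` before truncation. -/
noncomputable def largerRoot (D w p : ℝ) : ℝ :=
  (w + √(w ^ 2 + 4 * p * D)) / (2 * D)

section LargerRoot

variable {D w p : ℝ}

theorem mul_largerRoot_sq_sub_mul_largerRoot (hD : D ≠ 0) (hdisc : 0 ≤ w ^ 2 + 4 * p * D) :
    D * largerRoot D w p ^ 2 - w * largerRoot D w p = p := by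
  have hsq : √(w ^ 2 + 4 * p * D) ^ 2 = w ^ 2 + 4 * p * D := Real.sq_sqrt hdisc
  rw [largerRoot]
  generalize √(w ^ 2 + 4 * p * D) = r at hsq ⊢
  field_simp
  linear_combination hsq

theorem one_le_largerRoot (hD : 0 < D) (hp : D - w ≤ p) : 1 ≤ largerRoot D w p := by
  have hsqrt : 2 * D - w ≤ √(w ^ 2 + 4 * p * D) := Real.le_sqrt_of_sq_le (by nlinarith)
  rw [largerRoot, one_le_div (by positivity)]
  linarith

end LargerRoot

/-- The value of `R_iid` in terms of `u = 1 + 2 s*(p)`, with `v` standing for `σ²`; the variable `p`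
has been eliminated through `p = D u² - (v - D) u`. -/
noncomputable def rateOfRoot (v D u : ℝ) : ℝ :=
  Real.log u / 2 + (u - 1) * (D * u - v) / (2 * (v - D))

section RateOfRoot

variable {v D u : ℝ}

theorem rateOfRoot_sub_linear_eq (hD : D ≠ 0) (hv : v ≠ 0) (hDv : v - D ≠ 0) :
    rateOfRoot v D u - 1 / 2 * Real.log (v / D) - (D * u - v) * (u + 1) / (2 * v) =
      (Real.log u - Real.log (v / D) - (u - v / D) / (v / D)) / 2 +
        (D * u - v) ^ 2 / (2 * v * (v - D)) := by
  rw [rateOfRoot]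
  field_simp
  ring

theorem abs_rateOfRoot_sub_linear_le (hD : 0 < D) (hDv : D < v) (hu : 1 ≤ u) :
    |rateOfRoot v D u - 1 / 2 * Real.log (v / D) - (D * u - v) * (u + 1) / (2 * v)| ≤
      (D * u - v) ^ 2 / (2 * D * (v - D)) := by
  have hv : 0 < v := hD.trans hDv
  have hw : 0 < v - D := sub_pos.2 hDv
  have hlog : |Real.log u - Real.log (v / D) - (u - v / D) / (v / D)| ≤
      (D * u - v) ^ 2 / (D * v) :=
    calc
      _ ≤ (u - v / D) ^ 2 / (v / D * u) :=
        abs_log_sub_log_sub_div_le (div_pos hv hD) (one_pos.trans_le hu)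
      _ = (D * u - v) ^ 2 / (D * v) / u := by field_simp
      _ ≤ (D * u - v) ^ 2 / (D * v) := div_le_self (by positivity) hu
  have hquad : 0 ≤ (D * u - v) ^ 2 / (2 * v * (v - D)) := by positivity
  rw [rateOfRoot_sub_linear_eq hD.ne' hv.ne' hw.ne']
  calc
    _ ≤ |Real.log u - Real.log (v / D) - (u - v / D) / (v / D)| / 2 +
        (D * u - v) ^ 2 / (2 * v * (v - D)) := by
      refine (abs_add_le _ _).trans_eq ?_
      rw [abs_div, abs_two, abs_of_nonneg hquad]
    _ ≤ (D * u - v) ^ 2 / (D * v) / 2 + (D * u - v) ^ 2 / (2 * v * (v - D)) := by gcongr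
    _ = (D * u - v) ^ 2 / (2 * D * (v - D)) := by field_simp; ring

end RateOfRoot

section Riid

variable {σ D p : ℝ}

theorem one_add_two_mul_sStar (hD : D ≠ 0) :
    1 + 2 * sStar σ D p = max 1 (largerRoot D (σ ^ 2 - D) p) := by
  rw [sStar, mul_max_of_nonneg _ _ zero_le_two, ← max_add_add_left, largerRoot]
  congr 1
  · ring
  · field_simp
    ring

theorem Riid_eq_rateOfRoot {u : ℝ} (hu : u ≠ 0) (hs : 1 + 2 * sStar σ D p = u)
    (hroot : D * u ^ 2 - (σ ^ 2 - D) * u = p) : Riid σ D p = rateOfRoot (σ ^ 2) D u := by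
  have hs' : sStar σ D p = (u - 1) / 2 := by linarith
  have hpu : p / u = D * u - (σ ^ 2 - D) := by rw [← hroot]; field_simp
  calc
    Riid σ D p = Real.log u / 2 + (u - 1) / 2 * (p / u - D) / (σ ^ 2 - D) := by
      rw [Riid, hs, hs', ← div_div]
      ring
    _ = rateOfRoot (σ ^ 2) D u := by
      rw [hpu, rateOfRoot, ← div_div]
      ring

theorem abs_Riid_sub_linear_le (hD : 0 < D) (hDσ : D < σ ^ 2) (hp : 2 * D - σ ^ 2 ≤ p) :
    |Riid σ D p - (1 / 2) * Real.log (σ ^ 2 / D) - (p - σ ^ 2) / (2 * σ ^ 2)| ≤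
      1 / (8 * D * (σ ^ 2 - D)) * (p - σ ^ 2) ^ 2 := by
  have hw : 0 < σ ^ 2 - D := sub_pos.2 hDσ
  have hdisc : 0 ≤ (σ ^ 2 - D) ^ 2 + 4 * p * D := by nlinarith [sq_nonneg (σ ^ 2 - D - 2 * D)]
  have hroot := mul_largerRoot_sq_sub_mul_largerRoot hD.ne' hdisc
  have hu : 1 ≤ largerRoot D (σ ^ 2 - D) p := one_le_largerRoot hD (by linarith)
  have hs : 1 + 2 * sStar σ D p = largerRoot D (σ ^ 2 - D) p := by
    rw [one_add_two_mul_sStar hD.ne', max_eq_right hu]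
  set u := largerRoot D (σ ^ 2 - D) p
  have hfactor : p - σ ^ 2 = (D * u - σ ^ 2) * (u + 1) := by linear_combination -hroot
  rw [Riid_eq_rateOfRoot (by positivity) hs hroot, hfactor]
  calc
    _ ≤ (D * u - σ ^ 2) ^ 2 / (2 * D * (σ ^ 2 - D)) := abs_rateOfRoot_sub_linear_le hD hDσ hu
    _ = 1 / (8 * D * (σ ^ 2 - D)) * ((D * u - σ ^ 2) * 2) ^ 2 := by field_simp; norm_num
    _ ≤ 1 / (8 * D * (σ ^ 2 - D)) * ((D * u - σ ^ 2) * (u + 1)) ^ 2 := by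
      rw [mul_pow _ (2 : ℝ), mul_pow _ (u + 1)]
      gcongr
      linarith

end Riid

theorem stmt9 (σ D : ℝ) (hσ : 0 < σ) (hD : 0 < D) (hDσ : D < σ ^ 2) :
    ∃ δ > (0 : ℝ), ∃ C > (0 : ℝ), ∀ p : ℝ, |p - σ ^ 2| < δ →
      |Riid σ D p - (1 / 2) * Real.log (σ ^ 2 / D) - (p - σ ^ 2) / (2 * σ ^ 2)| ≤
        C * (p - σ ^ 2) ^ 2 := by
  have hw : 0 < σ ^ 2 - D := sub_pos.2 hDσ
  refine ⟨2 * (σ ^ 2 - D), mul_pos two_pos hw, 1 / (8 * D * (σ ^ 2 - D)),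
    one_div_pos.2 (mul_pos (by positivity) hw), fun p hp ↦ ?_⟩
  exact abs_Riid_sub_linear_le hD hDσ (by linarith [(abs_lt.1 hp).1])
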